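/- Assume in addition that M is positive definite and d₁ ≥ 3, that tr(W) − 2·‖W‖ > 0, that 0 < γ < 2·(tr(W) − 2·‖W‖), and that τᵀ·P·τ ≥ tr(W). Then E[‖Ψ(γ)‖²_Υ] < E[‖Γ(ξ+τ)‖²_Υ]; that is, the asymptotic risk of the semi-modular posterior mean is strictly smaller than the asymptotic risk of the exact posterior mean. -/

import Mathlib

open Matrix MeasureTheory ProbabilityTheory

/-- The standard Gaussian measure on `ℝ^m` (iid standard normal coordinates). -/
noncomputable def stdGaussian (m : ℕ) : Measure (Fin m → ℝ) :=
  Measure.pi fun _ => gaussianReal 0 1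

/-- `μ` is the multivariate Gaussian law on `ℝ^m` with mean `mean` and covariance
matrix `V`, i.e. the law of `mean + A ζ` for a standard Gaussian `ζ` and any matrix
`A` with `A Aᵀ = V`. -/
def IsGaussianLaw {m : ℕ} (μ : Measure (Fin m → ℝ)) (mean : Fin m → ℝ)
    (V : Matrix (Fin m) (Fin m) ℝ) : Prop :=
  ∃ A : Matrix (Fin m) (Fin m) ℝ, A * Aᵀ = V ∧
    μ = Measure.map (fun x => mean + A.mulVec x) (stdGaussian m)

/-- The operator (spectral) norm of a real square matrix. -/
noncomputable def matOpNorm {n : ℕ} (A : Matrix (Fin n) (Fin n) ℝ) : ℝ :=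
  ‖Matrix.toEuclideanCLM (𝕜 := ℝ) A‖

/-!
Write `x = Aζ` with `ζ` standard Gaussian and `A Aᵀ = Ω`, factor `Υ = Lᵀ L`, and put
`Z = L Γ₁ (x + τ)`, `Y = L (Γ₁ - Γ) (x + τ)`. Since `Γ₁ τ = 0`, these are affine images
`Z = ∑ ζᵢ cᵢ`, `Y = ∑ ζᵢ bᵢ + θ` of `ζ` in Euclidean space with `θ = L (Γ₁ - Γ) τ`. Then
`Q = ‖Y‖²`, and the two risks are `E‖Z - (γ/‖Y‖²) Y‖²` and `E‖Z - Y‖²`. The hypotheses on the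
covariances say `∑ ⟪cᵢ, bᵢ⟫ = ∑ ‖bᵢ‖² = tr W`, so the second risk is
`E‖Z‖² - tr W + ‖θ‖² ≥ E‖Z‖²`, and it remains to see that the first is `< E‖Z‖²`.

This is the James–Stein argument. Gaussian integration by parts gives
`E[⟪Z, Y⟫/(‖Y‖² + ε)] = E[∑ ⟪cᵢ, bᵢ⟫/(‖Y‖² + ε) - 2 ∑ ⟪cᵢ, Y⟫⟪bᵢ, Y⟫/(‖Y‖² + ε)²]`, and
`∑ ⟪cᵢ, Y⟫⟪bᵢ, Y⟫ = ⟪Y, L M Lᵀ Y⟫ ≤ ‖W‖ ‖Y‖²` because the nonzero eigenvalues of the symmetric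
matrix `L M Lᵀ` are eigenvalues of `W = Lᵀ L M` (`quadForm_le_matOpNorm`). Hence
`(tr W - 2‖W‖) E[1/(‖Y‖² + ε)] ≤ E[⟪Z, Y⟫/(‖Y‖² + ε)]` (`integral_inner_div_reg`).
Bounding the right side by the inequality of arithmetic and geometric means shows that
`E[1/(‖Y‖² + ε)]` is bounded uniformly in `ε`; by Fatou, `Y ≠ 0` almost surely and `1/‖Y‖²` is
integrable (`inv_norm_sq_integrable`). Letting `ε → 0` by dominated convergence and expanding the
square, the first risk is at most `E‖Z‖² - γ (2 (tr W - 2‖W‖) - γ) E[1/‖Y‖²] < E‖Z‖²`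
(`shrinkage_risk`).
-/

/-! ### Gaussian integration by parts -/

open scoped RealInnerProductSpace

/-- Stein's identity on the line: integration by parts against the standard normal density `φ`,
which satisfies `φ' = -x φ`. -/
lemma gaussian_stein_one (g g' : ℝ → ℝ) (hd : ∀ x, HasDerivAt g (g' x) x)
    (hg : Integrable g (gaussianReal 0 1)) (hg' : Integrable g' (gaussianReal 0 1))
    (hxg : Integrable (fun x => x * g x) (gaussianReal 0 1)) :
    ∫ x, x * g x ∂(gaussianReal 0 1) = ∫ x, g' x ∂(gaussianReal 0 1) := by
  have key : ∀ f : ℝ → ℝ, Integrable f (gaussianReal 0 1) →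
      Integrable (fun x => gaussianPDFReal 0 1 x * f x) := by
    intro f hf
    rw [gaussianReal_of_var_ne_zero 0 one_ne_zero, integrable_withDensity_iff_integrable_smul'
      (measurable_gaussianPDF 0 1) (.of_forall fun _ => gaussianPDF_lt_top)] at hf
    simpa only [toReal_gaussianPDF, smul_eq_mul] using hf
  have hv : ∀ x : ℝ, HasDerivAt (gaussianPDFReal 0 1) (-x * gaussianPDFReal 0 1 x) x := by
    intro x
    have h1 : HasDerivAt (fun y : ℝ => -(y - 0) ^ 2 / (2 * ((1 : NNReal) : ℝ))) (-x) x := by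
      have := ((((hasDerivAt_id x).sub_const 0).pow 2).neg).div_const (2 * ((1 : NNReal) : ℝ))
      convert! this using 1
      simp; ring
    have h2 := (h1.exp).const_mul ((√(2 * Real.pi * ((1 : NNReal) : ℝ)))⁻¹)
    rw [gaussianPDFReal_def]
    convert! h2 using 1
    ring
  rw [integral_gaussianReal_eq_integral_smul one_ne_zero,
    integral_gaussianReal_eq_integral_smul one_ne_zero]
  have := integral_mul_deriv_eq_deriv_mul_of_integrable (u := g) (u' := g')
    (v := gaussianPDFReal 0 1) (v' := fun x => -x * gaussianPDFReal 0 1 x)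
    (fun x _ => hd x) (fun x _ => hv x)
    (by refine (key _ hxg).neg.congr (.of_forall fun x => ?_); simp; ring)
    (by refine (key _ hg').congr (.of_forall fun x => ?_); simp; ring)
    (by refine (key _ hg).congr (.of_forall fun x => ?_); simp; ring)
  have e1 : ∀ x, gaussianPDFReal 0 1 x • (x * g x) = -(g x * (-x * gaussianPDFReal 0 1 x)) := by
    intro x; simp only [smul_eq_mul]; ring
  have e2 : ∀ x, gaussianPDFReal 0 1 x • g' x = g' x * gaussianPDFReal 0 1 x := by
    intro x; simp only [smul_eq_mul]; ring
  simp_rw [e1, e2, integral_neg, this, neg_neg]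

instance stdGaussian_prob (m : ℕ) : IsProbabilityMeasure (_root_.stdGaussian m) := by
  unfold _root_.stdGaussian; infer_instance

/-- Stein's identity in the `i`-th coordinate: Fubini reduces it to the line, where almost every
slice of an integrable function is integrable. Here `g'` is the partial derivative `∂ᵢ g`. -/
lemma gaussian_stein {m : ℕ} (i : Fin m) (g g' : (Fin m → ℝ) → ℝ)
    (hd : ∀ x, HasDerivAt (fun t => g (Function.update x i t)) (g' x) (x i))
    (hg : Integrable g (_root_.stdGaussian m)) (hg' : Integrable g' (_root_.stdGaussian m))
    (hxg : Integrable (fun x => x i * g x) (_root_.stdGaussian m)) :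
    ∫ x, x i * g x ∂(_root_.stdGaussian m) = ∫ x, g' x ∂(_root_.stdGaussian m) := by
  obtain _ | n := m
  · exact i.elim0
  have hmp := (measurePreserving_piFinSuccAbove (fun _ : Fin (n + 1) => gaussianReal 0 1) i).symm
  have hme := (MeasurableEquiv.piFinSuccAbove (fun _ : Fin (n + 1) => ℝ) i).symm.measurableEmbedding
  have hint : ∀ f : (Fin (n + 1) → ℝ) → ℝ, Integrable f (_root_.stdGaussian (n + 1)) →
      Integrable (fun z : ℝ × (Fin n → ℝ) => f (i.insertNth z.1 z.2))
        ((gaussianReal 0 1).prod (_root_.stdGaussian n)) := fun f hf =>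
    (hmp.integrable_comp_emb hme).2 hf
  have heq : ∀ f : (Fin (n + 1) → ℝ) → ℝ, Integrable f (_root_.stdGaussian (n + 1)) →
      ∫ x, f x ∂(_root_.stdGaussian (n + 1)) =
        ∫ y, ∫ t, f (i.insertNth t y) ∂(gaussianReal 0 1) ∂(_root_.stdGaussian n) := fun f hf =>
    (hmp.integral_comp hme f).symm.trans (integral_prod_symm _ (hint f hf))
  rw [heq _ hxg, heq _ hg']
  apply integral_congr_ae
  filter_upwards [(hint _ hg).prod_left_ae, (hint _ hg').prod_left_ae,
    (hint _ hxg).prod_left_ae] with y h1 h2 h3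
  simp only [Fin.insertNth_apply_same] at h3 ⊢
  refine gaussian_stein_one _ _ (fun t => ?_) h1 h2 h3
  have := hd (i.insertNth t y)
  simpa [Fin.insertNth_apply_same, Fin.update_insertNth] using this

/-! ### Affine images of a Gaussian vector and the shrinkage inequality -/

section Shrinkage

variable {m : ℕ} {E : Type*} [NormedAddCommGroup E] [InnerProductSpace ℝ E]

/-- The affine map `x ↦ ∑ xᵢ bᵢ + θ`. -/
def affineMap (b : Fin m → E) (θ : E) (x : Fin m → ℝ) : E := ∑ i, x i • b i + θ

lemma affineMap_continuous (b : Fin m → E) (θ : E) : Continuous (affineMap b θ) := by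
  unfold affineMap; fun_prop

lemma memLp_coord (i : Fin m) : MemLp (fun x => x i) 2 (_root_.stdGaussian m) :=
  (memLp_id_gaussianReal' (μ := 0) (v := 1) 2 (by simp)).comp_measurePreserving
    (measurePreserving_eval (fun _ : Fin m => gaussianReal 0 1) i)

lemma memLp_affineMap (b : Fin m → E) (θ : E) :
    MemLp (affineMap b θ) 2 (_root_.stdGaussian m) := by
  refine MemLp.add (memLp_finsetSum _ fun i _ => ?_) (memLp_const θ)
  refine (memLp_coord i).of_le_mul (c := ‖b i‖) ?_ (.of_forall fun x => ?_)
  · exact (by fun_prop : Continuous fun x : Fin m → ℝ => x i • b i).aestronglyMeasurable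
  · rw [norm_smul, mul_comm]

lemma integrable_norm_sq_affineMap (b : Fin m → E) (θ : E) :
    Integrable (fun x => ‖affineMap b θ x‖ ^ 2) (_root_.stdGaussian m) :=
  (memLp_affineMap b θ).integrable_norm_pow (by simp)

lemma memLp_inner (c : E) (b : Fin m → E) (θ : E) :
    MemLp (fun x => ⟪c, affineMap b θ x⟫) 2 (_root_.stdGaussian m) :=
  (memLp_affineMap b θ).const_inner c

lemma affineMap_update (b : Fin m → E) (θ : E) (x : Fin m → ℝ) (i : Fin m) (t : ℝ) :
    affineMap b θ (Function.update x i t) = affineMap b θ x + (t - x i) • b i := by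
  have h : ∀ j, Function.update x i t j • b j
      = x j • b j + if j = i then (t - x i) • b i else 0 := by
    intro j
    by_cases hj : j = i
    · subst hj; simp [sub_smul]
    · simp [hj]
  simp only [affineMap, h, Finset.sum_add_distrib, Finset.sum_ite_eq', Finset.mem_univ, if_true]
  abel

lemma hasDerivAt_affineMap (b : Fin m → E) (θ : E) (x : Fin m → ℝ) (i : Fin m) :
    HasDerivAt (fun t => affineMap b θ (Function.update x i t)) (b i) (x i) := by
  simp only [affineMap_update]
  simpa using (((hasDerivAt_id (x i)).sub_const (x i)).smul_const (b i)).const_add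
    (affineMap b θ x)

lemma inner_affineMap_zero (c : Fin m → E) (x : Fin m → ℝ) (y : E) :
    ⟪affineMap c 0 x, y⟫ = ∑ i, x i * ⟪c i, y⟫ := by
  simp [affineMap, sum_inner, inner_smul_left]

lemma integral_inner_affineMap (b c : Fin m → E) (θ : E) :
    ∫ x, ⟪affineMap c 0 x, affineMap b θ x⟫ ∂(_root_.stdGaussian m) = ∑ i, ⟪c i, b i⟫ := by
  have hi : ∀ i, Integrable (fun x => x i * ⟪c i, affineMap b θ x⟫) (_root_.stdGaussian m) :=
    fun i => (memLp_coord i).integrable_mul (memLp_inner (c i) b θ)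
  simp only [inner_affineMap_zero]
  rw [integral_finsetSum _ fun i _ => hi i]
  refine Finset.sum_congr rfl fun i _ => ?_
  rw [gaussian_stein i (fun x => ⟪c i, affineMap b θ x⟫) (fun _ => ⟪c i, b i⟫) ?_
    ((memLp_inner (c i) b θ).integrable (by norm_num)) (integrable_const _) (hi i)]
  · simp
  · intro x
    simpa using (hasDerivAt_const (x i) (c i)).inner ℝ (hasDerivAt_affineMap b θ x i)

lemma integral_inner_const (b : Fin m → E) (θ y : E) :
    ∫ x, ⟪y, affineMap b θ x⟫ ∂(_root_.stdGaussian m) = ⟪y, θ⟫ := by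
  have hx : ∀ i : Fin m, ∫ x, x i ∂(_root_.stdGaussian m) = 0 := by
    intro i
    have := gaussian_stein i (fun _ => 1) (fun _ => 0) (fun x => hasDerivAt_const _ _)
      (integrable_const _) (integrable_const _)
      (by simpa using (memLp_coord i).integrable (by norm_num))
    simpa using this
  have h : ∀ x, ⟪y, affineMap b θ x⟫ = ∑ i, x i * ⟪y, b i⟫ + ⟪y, θ⟫ := by
    intro x; simp [affineMap, inner_add_right, inner_sum, inner_smul_right]
  have hi : ∀ i, Integrable (fun x : Fin m → ℝ => x i * ⟪y, b i⟫) (_root_.stdGaussian m) :=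
    fun i => ((memLp_coord i).integrable (by norm_num)).mul_const _
  simp only [h]
  rw [integral_add (integrable_finsetSum _ fun i _ => hi i) (integrable_const _),
    integral_finsetSum _ fun i _ => hi i]
  simp [integral_mul_const, hx]

lemma integral_norm_sq_affineMap (b : Fin m → E) (θ : E) :
    ∫ x, ‖affineMap b θ x‖ ^ 2 ∂(_root_.stdGaussian m) = ∑ i, ‖b i‖ ^ 2 + ‖θ‖ ^ 2 := by
  have h : ∀ x, ‖affineMap b θ x‖ ^ 2
      = ⟪affineMap b 0 x, affineMap b θ x⟫ + ⟪θ, affineMap b θ x⟫ := by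
    intro x
    rw [← inner_add_left, ← real_inner_self_eq_norm_sq]
    simp [affineMap]
  simp only [h]
  rw [integral_add, integral_inner_affineMap, integral_inner_const]
  · simp
  · simp only [inner_affineMap_zero]
    exact integrable_finsetSum _ fun i _ =>
      (memLp_coord i).integrable_mul (memLp_inner (b i) b θ)
  · exact (memLp_inner θ b θ).integrable (by norm_num)

lemma integrable_div_reg (b : Fin m → E) (θ : E) {ε : ℝ} (hε : 0 < ε) {f : (Fin m → ℝ) → ℝ}
    (hf : Integrable f (_root_.stdGaussian m)) :
    Integrable (fun x => f x / (‖affineMap b θ x‖ ^ 2 + ε)) (_root_.stdGaussian m) := by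
  have hpos : ∀ x, 0 < ‖affineMap b θ x‖ ^ 2 + ε := fun x => by positivity
  have hc : Continuous fun x => (‖affineMap b θ x‖ ^ 2 + ε)⁻¹ :=
    (((affineMap_continuous b θ).norm.pow 2).add continuous_const).inv₀ fun x => (hpos x).ne'
  simp only [div_eq_mul_inv]
  refine hf.mul_bdd (c := ε⁻¹) hc.aestronglyMeasurable (.of_forall fun x => ?_)
  rw [norm_inv, Real.norm_of_nonneg (hpos x).le]
  exact inv_anti₀ hε (by nlinarith [sq_nonneg ‖affineMap b θ x‖])

/-- Stein's identity for the field `Y / (‖Y‖² + ε)`, with `w` bounding the quadratic form that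
comes from differentiating the denominator. -/
lemma integral_inner_div_reg (b c : Fin m → E) (θ : E) {ε : ℝ} (hε : 0 < ε) {w : ℝ} (hw : 0 ≤ w)
    (hbc : ∀ x, ∑ i, ⟪c i, affineMap b θ x⟫ * ⟪b i, affineMap b θ x⟫ ≤ w * ‖affineMap b θ x‖ ^ 2) :
    (∑ i, ⟪c i, b i⟫ - 2 * w) * ∫ x, 1 / (‖affineMap b θ x‖ ^ 2 + ε) ∂(_root_.stdGaussian m)
      ≤ ∫ x, ⟪affineMap c 0 x, affineMap b θ x⟫ / (‖affineMap b θ x‖ ^ 2 + ε)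
          ∂(_root_.stdGaussian m) := by
  set Y := affineMap b θ with hY
  set s : (Fin m → ℝ) → ℝ := fun x => ‖Y x‖ ^ 2 + ε with hs
  have hpos : ∀ x, 0 < s x := fun x => by simp only [hs]; positivity
  have h1 : ∀ i, Integrable (fun x => ⟪c i, Y x⟫ / s x) (_root_.stdGaussian m) := fun i =>
    integrable_div_reg b θ hε ((memLp_inner (c i) b θ).integrable (by norm_num))
  have h2 : ∀ i, Integrable (fun x => x i * (⟪c i, Y x⟫ / s x)) (_root_.stdGaussian m) := fun i => by
    simp only [← mul_div_assoc]
    exact integrable_div_reg b θ hε ((memLp_coord i).integrable_mul (memLp_inner (c i) b θ))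
  have h3 : ∀ i, Integrable (fun x => ⟪c i, b i⟫ / s x -
      2 * (⟪c i, Y x⟫ * ⟪b i, Y x⟫) / s x / s x) (_root_.stdGaussian m) := fun i =>
    (integrable_div_reg b θ hε (integrable_const _)).sub
      (integrable_div_reg b θ hε (integrable_div_reg b θ hε
        (((memLp_inner (c i) b θ).integrable_mul (memLp_inner (b i) b θ)).const_mul 2)))
  have hst : ∀ i, ∫ x, x i * (⟪c i, Y x⟫ / s x) ∂(_root_.stdGaussian m)
      = ∫ x, ⟪c i, b i⟫ / s x - 2 * (⟪c i, Y x⟫ * ⟪b i, Y x⟫) / s x / s x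
          ∂(_root_.stdGaussian m) := by
    intro i
    refine gaussian_stein i (fun x => ⟪c i, Y x⟫ / s x) _ (fun x => ?_) (h1 i) (h3 i) (h2 i)
    have hd := hasDerivAt_affineMap b θ x i
    have hn := ((hasDerivAt_const (x i) (c i)).inner ℝ hd).fun_div (hd.norm_sq.add_const ε)
      (by positivity)
    simp only [Function.update_eq_self, inner_zero_left, add_zero] at hn
    convert! hn using 1
    have := (hpos x).ne'
    simp only [hs, hY] at this ⊢
    rw [real_inner_comm (b i) (affineMap b θ x)]
    field_simp
  have hlhs : ∀ x, ⟪affineMap c 0 x, Y x⟫ / s x = ∑ i, x i * (⟪c i, Y x⟫ / s x) := by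
    intro x
    rw [inner_affineMap_zero, Finset.sum_div]
    exact Finset.sum_congr rfl fun i _ => by ring
  change _ * ∫ x, 1 / s x ∂_ ≤ ∫ x, ⟪affineMap c 0 x, Y x⟫ / s x ∂_
  simp only [hlhs]
  rw [integral_finsetSum _ fun i _ => h2 i, Finset.sum_congr rfl fun i _ => hst i,
    ← integral_finsetSum _ fun i _ => h3 i, ← integral_const_mul]
  refine integral_mono ((integrable_div_reg b θ hε (integrable_const 1)).const_mul _)
    (integrable_finsetSum _ fun i _ => h3 i) fun x => ?_
  have hx := hpos x
  have e : ∑ i, (⟪c i, b i⟫ / s x - 2 * (⟪c i, Y x⟫ * ⟪b i, Y x⟫) / s x / s x)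
      = (∑ i, ⟪c i, b i⟫) / s x - 2 * (∑ i, ⟪c i, Y x⟫ * ⟪b i, Y x⟫) / s x / s x := by
    rw [Finset.sum_sub_distrib, Finset.mul_sum, Finset.sum_div, Finset.sum_div, Finset.sum_div]
  simp only [e]
  have hle : 2 * (∑ i, ⟪c i, Y x⟫ * ⟪b i, Y x⟫) / s x ≤ 2 * w := by
    rw [div_le_iff₀ hx]
    have : ‖Y x‖ ^ 2 ≤ s x := by simp only [hs]; linarith
    nlinarith [hbc x]
  rw [mul_one_div, sub_div]
  gcongr

/-- Fatou's lemma for `1 / (f + ε)` as `ε → 0`. The limit is taken in `ℝ≥0∞`, where `0⁻¹ = ∞`, so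
that the bound also shows that `f` vanishes only on a null set. -/
lemma integrable_one_div_of_reg {α : Type*} [MeasurableSpace α] {ρ : Measure α} {f : α → ℝ}
    (hf : Measurable f) (hf0 : ∀ x, 0 ≤ f x) (K : ℝ)
    (hi : ∀ ε : ℝ, 0 < ε → Integrable (fun x => 1 / (f x + ε)) ρ)
    (hK : ∀ ε : ℝ, 0 < ε → ∫ x, 1 / (f x + ε) ∂ρ ≤ K) :
    (∀ᵐ x ∂ρ, f x ≠ 0) ∧ Integrable (fun x => 1 / f x) ρ := by
  set F : α → ENNReal := fun x => (ENNReal.ofReal (f x))⁻¹ with hF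
  set G : ℕ → α → ENNReal := fun n x => (ENNReal.ofReal (f x + 1 / ((n : ℝ) + 1)))⁻¹ with hG
  have hFm : Measurable F := (ENNReal.measurable_ofReal.comp hf).inv
  have hGm : ∀ n, Measurable (G n) := fun n =>
    (ENNReal.measurable_ofReal.comp (hf.add_const _)).inv
  have hlim : ∀ x, Filter.Tendsto (fun n => G n x) Filter.atTop (nhds (F x)) := by
    intro x
    refine ((continuous_inv (G := ENNReal)).tendsto _).comp
      ((ENNReal.continuous_ofReal.tendsto _).comp ?_)
    simpa using (tendsto_one_div_add_atTop_nhds_zero_nat (𝕜 := ℝ)).const_add (f x)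
  have hGK : ∀ n, ∫⁻ x, G n x ∂ρ ≤ ENNReal.ofReal K := by
    intro n
    have hε : 0 < 1 / ((n : ℝ) + 1) := by positivity
    have hp : ∀ x, 0 < f x + 1 / ((n : ℝ) + 1) := fun x => add_pos_of_nonneg_of_pos (hf0 x) hε
    have h : ∀ x, G n x = ENNReal.ofReal (1 / (f x + 1 / ((n : ℝ) + 1))) := fun x => by
      rw [one_div (f x + _), ENNReal.ofReal_inv_of_pos (hp x)]
    rw [lintegral_congr h, ← ofReal_integral_eq_lintegral_ofReal (hi _ hε)
      (.of_forall fun x => (one_div_pos.2 (hp x)).le)]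
    exact ENNReal.ofReal_le_ofReal (hK _ hε)
  have hFtop : ∫⁻ x, F x ∂ρ < ⊤ := by
    refine lt_of_le_of_lt ?_ (ENNReal.ofReal_lt_top (r := K))
    calc ∫⁻ x, F x ∂ρ = ∫⁻ x, Filter.liminf (fun n => G n x) Filter.atTop ∂ρ :=
          lintegral_congr fun x => (hlim x).liminf_eq.symm
      _ ≤ Filter.liminf (fun n => ∫⁻ x, G n x ∂ρ) Filter.atTop := lintegral_liminf_le hGm
      _ ≤ ENNReal.ofReal K := Filter.liminf_le_of_le (by isBoundedDefault) fun a ha =>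
          let ⟨n, hn⟩ := ha.exists
          hn.trans (hGK n)
  constructor
  · filter_upwards [ae_lt_top hFm hFtop.ne] with x hx h0
    simp [hF, h0] at hx
  · refine ⟨(measurable_const.div hf).aestronglyMeasurable,
      lt_of_le_of_lt (lintegral_mono fun x => ?_) hFtop⟩
    rw [Real.enorm_of_nonneg (one_div_nonneg.2 (hf0 x)), one_div]
    rcases (hf0 x).eq_or_lt with h | h
    · simp [hF, ← h]
    · rw [ENNReal.ofReal_inv_of_pos h]

/-- With `k = ∑ ⟪cᵢ, bᵢ⟫ - 2w > 0`, Stein's identity bounds its own left side: combined with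
`⟪Z, Y⟫ / s ≤ ‖Z‖² / (2k) + (k / 2) / s` it gives `E[1 / s] ≤ E‖Z‖² / k²` for every
`s = ‖Y‖² + ε`. -/
lemma inv_norm_sq_integrable (b c : Fin m → E) (θ : E) {w : ℝ} (hw : 0 ≤ w)
    (hbc : ∀ x, ∑ i, ⟪c i, affineMap b θ x⟫ * ⟪b i, affineMap b θ x⟫ ≤ w * ‖affineMap b θ x‖ ^ 2)
    (hT : 0 < ∑ i, ⟪c i, b i⟫ - 2 * w) :
    (∀ᵐ x ∂(_root_.stdGaussian m), affineMap b θ x ≠ 0) ∧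
      Integrable (fun x => 1 / ‖affineMap b θ x‖ ^ 2) (_root_.stdGaussian m) := by
  set Y := affineMap b θ with hY
  set k := ∑ i, ⟪c i, b i⟫ - 2 * w with hk
  set K := (∫ x, ‖affineMap c 0 x‖ ^ 2 ∂(_root_.stdGaussian m)) / k ^ 2 with hK
  have hYc : Continuous Y := affineMap_continuous b θ
  have hZ := integrable_norm_sq_affineMap c (0 : E)
  have hin : Integrable (fun x => ⟪affineMap c 0 x, Y x⟫) (_root_.stdGaussian m) := by
    simp only [inner_affineMap_zero]
    exact integrable_finsetSum _ fun i _ =>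
      (memLp_coord i).integrable_mul (memLp_inner (c i) b θ)
  have hbound : ∀ ε : ℝ, 0 < ε → ∫ x, 1 / (‖Y x‖ ^ 2 + ε) ∂(_root_.stdGaussian m) ≤ K := by
    intro ε hε
    have hone := integrable_div_reg b θ hε (integrable_const (μ := _root_.stdGaussian m) (1 : ℝ))
    have h1 := integral_inner_div_reg b c θ hε hw hbc
    have h2 : ∫ x, ⟪affineMap c 0 x, Y x⟫ / (‖Y x‖ ^ 2 + ε) ∂(_root_.stdGaussian m)
        ≤ ∫ x, (1 / (2 * k)) * ‖affineMap c 0 x‖ ^ 2 + (k / 2) * (1 / (‖Y x‖ ^ 2 + ε))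
          ∂(_root_.stdGaussian m) := by
      refine integral_mono (integrable_div_reg b θ hε hin)
        ((hZ.const_mul _).add (hone.const_mul _)) fun x => ?_
      have hs : 0 < ‖Y x‖ ^ 2 + ε := by positivity
      -- `‖Z - (k / s) Y‖² ≥ 0` with `s = ‖Y‖² + ε ≥ ‖Y‖²`
      have h0 := sq_nonneg ‖affineMap c 0 x - (k / (‖Y x‖ ^ 2 + ε)) • Y x‖
      rw [norm_sub_sq_real, inner_smul_right, norm_smul, mul_pow, Real.norm_eq_abs, sq_abs] at h0
      have h3 : (k / (‖Y x‖ ^ 2 + ε)) ^ 2 * ‖Y x‖ ^ 2 ≤ k ^ 2 / (‖Y x‖ ^ 2 + ε) := by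
        rw [div_pow, div_mul_eq_mul_div, div_le_div_iff₀ (by positivity) hs]
        have : 0 ≤ k ^ 2 * (‖Y x‖ ^ 2 + ε) * ε := by positivity
        nlinarith
      have h4 : 0 ≤ ‖affineMap c 0 x‖ ^ 2
          - 2 * (k / (‖Y x‖ ^ 2 + ε) * ⟪affineMap c 0 x, Y x⟫) + k ^ 2 / (‖Y x‖ ^ 2 + ε) := by
        linarith
      have h5 : (1 / (2 * k)) * ‖affineMap c 0 x‖ ^ 2 + (k / 2) * (1 / (‖Y x‖ ^ 2 + ε))
          - ⟪affineMap c 0 x, Y x⟫ / (‖Y x‖ ^ 2 + ε)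
          = (1 / (2 * k)) * (‖affineMap c 0 x‖ ^ 2
          - 2 * (k / (‖Y x‖ ^ 2 + ε) * ⟪affineMap c 0 x, Y x⟫) + k ^ 2 / (‖Y x‖ ^ 2 + ε)) := by
        field_simp
        ring
      have h6 := mul_nonneg (by positivity : 0 ≤ 1 / (2 * k)) h4
      simp only
      linarith
    rw [integral_add (hZ.const_mul _) (hone.const_mul _), integral_const_mul,
      integral_const_mul] at h2
    have h3 := h1.trans h2
    rw [hK, le_div_iff₀ (by positivity)]
    have h4 : k / 2 * ∫ x, 1 / (‖Y x‖ ^ 2 + ε) ∂(_root_.stdGaussian m)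
        ≤ 1 / (2 * k) * ∫ x, ‖affineMap c 0 x‖ ^ 2 ∂(_root_.stdGaussian m) := by linarith
    have h5 := mul_le_mul_of_nonneg_left h4 (by positivity : 0 ≤ 2 * k)
    field_simp at h5
    linarith
  obtain ⟨h1, h2⟩ := integrable_one_div_of_reg (hYc.norm.pow 2).measurable
    (fun x => sq_nonneg ‖Y x‖) K (fun ε hε => integrable_div_reg b θ hε (integrable_const 1)) hbound
  exact ⟨h1.mono fun x hx h0 => hx (by simp [h0]), h2⟩

/-- The James–Stein inequality in normalised form: for `Z = ∑ xᵢ cᵢ` and `Y = ∑ xᵢ bᵢ + θ`,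
shrinking `Z` along `Y` by `γ / ‖Y‖²` has smaller risk than subtracting `Y` altogether. -/
theorem shrinkage_risk (b c : Fin m → E) (θ : E) {w : ℝ} (hw : 0 ≤ w)
    (hbc : ∀ x, ∑ i, ⟪c i, affineMap b θ x⟫ * ⟪b i, affineMap b θ x⟫ ≤ w * ‖affineMap b θ x‖ ^ 2)
    (hT : 0 < ∑ i, ⟪c i, b i⟫ - 2 * w) (hTb : ∑ i, ‖b i‖ ^ 2 = ∑ i, ⟪c i, b i⟫)
    (hθ : ∑ i, ⟪c i, b i⟫ ≤ ‖θ‖ ^ 2) {γ : ℝ} (hγ0 : 0 < γ)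
    (hγ2 : γ < 2 * (∑ i, ⟪c i, b i⟫ - 2 * w)) :
    ∫ x, ‖affineMap c 0 x - (γ / ‖affineMap b θ x‖ ^ 2) • affineMap b θ x‖ ^ 2
        ∂(_root_.stdGaussian m)
      < ∫ x, ‖affineMap c 0 x - affineMap b θ x‖ ^ 2 ∂(_root_.stdGaussian m) := by
  obtain ⟨hne, hinv⟩ := inv_norm_sq_integrable b c θ hw hbc hT
  have hreg := fun (n : ℕ) => integral_inner_div_reg b c θ
    (by positivity : 0 < 1 / ((n : ℝ) + 1)) hw hbc
  set Y := affineMap b θ with hY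
  set Z := affineMap c (0 : E) with hZ
  set T := ∑ i, ⟪c i, b i⟫ with hTdef
  have hYc : Continuous Y := affineMap_continuous b θ
  have hZc : Continuous Z := affineMap_continuous c 0
  have hZi : Integrable (fun x => ‖Z x‖ ^ 2) (_root_.stdGaussian m) :=
    integrable_norm_sq_affineMap c 0
  have hYi : Integrable (fun x => ‖Y x‖ ^ 2) (_root_.stdGaussian m) :=
    integrable_norm_sq_affineMap b θ
  have hin : Integrable (fun x => ⟪Z x, Y x⟫) (_root_.stdGaussian m) := by
    simp only [hZ, inner_affineMap_zero]
    exact integrable_finsetSum _ fun i _ =>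
      (memLp_coord i).integrable_mul (memLp_inner (c i) b θ)
  have hdom : Integrable (fun x => (‖Z x‖ ^ 2 + 1 / ‖Y x‖ ^ 2) / 2) (_root_.stdGaussian m) :=
    (hZi.add hinv).div_const 2
  have hle : ∀ x, ∀ ε : ℝ, 0 ≤ ε → Y x ≠ 0 →
      ‖⟪Z x, Y x⟫ / (‖Y x‖ ^ 2 + ε)‖ ≤ (‖Z x‖ ^ 2 + 1 / ‖Y x‖ ^ 2) / 2 := by
    intro x ε hε h0
    have hp : 0 < ‖Y x‖ := norm_pos_iff.2 h0
    have h1 : ‖⟪Z x, Y x⟫ / (‖Y x‖ ^ 2 + ε)‖ ≤ ‖Z x‖ * ‖Y x‖ / ‖Y x‖ ^ 2 := by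
      rw [norm_div, Real.norm_of_nonneg (by positivity : 0 ≤ ‖Y x‖ ^ 2 + ε)]
      gcongr
      · exact norm_inner_le_norm _ _
      · linarith
    refine h1.trans ?_
    have h2 : ‖Z x‖ * ‖Y x‖ / ‖Y x‖ ^ 2 = ‖Z x‖ * (1 / ‖Y x‖) := by field_simp
    rw [h2, ← _root_.one_div_pow]
    nlinarith [sq_nonneg (‖Z x‖ - 1 / ‖Y x‖)]
  have hquot : Integrable (fun x => ⟪Z x, Y x⟫ / ‖Y x‖ ^ 2) (_root_.stdGaussian m) := by
    refine hdom.mono' ((hZc.inner hYc).measurable.div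
      (hYc.norm.pow 2).measurable).aestronglyMeasurable ?_
    filter_upwards [hne] with x hx
    simpa using hle x 0 le_rfl hx
  -- let `ε = 1 / (n + 1) → 0` in the regularised inequality
  have hstein : (T - 2 * w) * ∫ x, 1 / ‖Y x‖ ^ 2 ∂(_root_.stdGaussian m)
      ≤ ∫ x, ⟪Z x, Y x⟫ / ‖Y x‖ ^ 2 ∂(_root_.stdGaussian m) := by
    have hden : ∀ x, Filter.Tendsto (fun n : ℕ => ‖Y x‖ ^ 2 + 1 / ((n : ℝ) + 1)) Filter.atTop
        (nhds (‖Y x‖ ^ 2)) := fun x => by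
      simpa using (tendsto_one_div_add_atTop_nhds_zero_nat (𝕜 := ℝ)).const_add (‖Y x‖ ^ 2)
    have hp : ∀ x, ∀ n : ℕ, 0 < ‖Y x‖ ^ 2 + 1 / ((n : ℝ) + 1) := fun x n => by positivity
    have hcont : ∀ n : ℕ, Continuous fun x => ‖Y x‖ ^ 2 + 1 / ((n : ℝ) + 1) := fun n =>
      (hYc.norm.pow 2).add continuous_const
    have hm1 : ∀ n : ℕ, AEStronglyMeasurable (fun x => 1 / (‖Y x‖ ^ 2 + 1 / ((n : ℝ) + 1)))
        (_root_.stdGaussian m) := fun n =>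
      (continuous_const.div (hcont n) fun x => (hp x n).ne').aestronglyMeasurable
    have hm2 : ∀ n : ℕ, AEStronglyMeasurable
        (fun x => ⟪Z x, Y x⟫ / (‖Y x‖ ^ 2 + 1 / ((n : ℝ) + 1))) (_root_.stdGaussian m) := fun n =>
      ((hZc.inner hYc).div (hcont n) fun x => (hp x n).ne').aestronglyMeasurable
    refine le_of_tendsto_of_tendsto' ((tendsto_integral_of_dominated_convergence
      (fun x => 1 / ‖Y x‖ ^ 2) hm1 hinv (fun n => ?_) ?_).const_mul (T - 2 * w))
      (tendsto_integral_of_dominated_convergence _ hm2 hdom (fun n => ?_) ?_) hreg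
    · filter_upwards [hne] with x hx
      have : 0 < ‖Y x‖ := norm_pos_iff.2 hx
      rw [Real.norm_of_nonneg (one_div_pos.2 (hp x n)).le]
      gcongr
      have : 0 < 1 / ((n : ℝ) + 1) := by positivity
      linarith
    · filter_upwards [hne] with x hx
      have : 0 < ‖Y x‖ := norm_pos_iff.2 hx
      exact tendsto_const_nhds.div (hden x) (by positivity)
    · filter_upwards [hne] with x hx
      exact hle x _ (by positivity) hx
    · filter_upwards [hne] with x hx
      have : 0 < ‖Y x‖ := norm_pos_iff.2 hx
      exact tendsto_const_nhds.div (hden x) (by positivity)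
  have hpos : 0 < ∫ x, 1 / ‖Y x‖ ^ 2 ∂(_root_.stdGaussian m) := by
    refine (integral_pos_iff_support_of_nonneg (fun x => by positivity) hinv).2 ?_
    have : Function.support (fun x => 1 / ‖Y x‖ ^ 2) =ᵐ[_root_.stdGaussian m] Set.univ := by
      filter_upwards [hne] with x hx
      refine propext ⟨fun _ => trivial, fun _ => ?_⟩
      have : 0 < ‖Y x‖ := norm_pos_iff.2 hx
      change 1 / ‖Y x‖ ^ 2 ≠ 0
      positivity
    rw [measure_congr this]
    simp
  have hL : ∀ x, ‖Z x - (γ / ‖Y x‖ ^ 2) • Y x‖ ^ 2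
      = ‖Z x‖ ^ 2 - 2 * γ * (⟪Z x, Y x⟫ / ‖Y x‖ ^ 2) + γ ^ 2 * (1 / ‖Y x‖ ^ 2) := by
    intro x
    rw [norm_sub_sq_real, inner_smul_right, norm_smul, mul_pow, Real.norm_eq_abs, sq_abs]
    -- the junk value at `Y x = 0` is harmless: both sides equal `‖Z x‖²`
    by_cases h : ‖Y x‖ = 0
    · simp [h]
    · field_simp
  have hR : ∀ x, ‖Z x - Y x‖ ^ 2 = ‖Z x‖ ^ 2 - 2 * ⟪Z x, Y x⟫ + ‖Y x‖ ^ 2 := fun x =>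
    norm_sub_sq_real _ _
  have hi1 : Integrable (fun x => ‖Z x‖ ^ 2 - 2 * γ * (⟪Z x, Y x⟫ / ‖Y x‖ ^ 2))
    (_root_.stdGaussian m) := hZi.sub (hquot.const_mul _)
  have hi2 : Integrable (fun x => ‖Z x‖ ^ 2 - 2 * ⟪Z x, Y x⟫) (_root_.stdGaussian m) :=
    hZi.sub (hin.const_mul _)
  simp only [hL, hR]
  rw [integral_add hi1 (hinv.const_mul _), integral_sub hZi (hquot.const_mul _),
    integral_const_mul, integral_const_mul, integral_add hi2 hYi,
    integral_sub hZi (hin.const_mul _), integral_const_mul, integral_inner_affineMap,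
    integral_norm_sq_affineMap b θ, hTb, ← hTdef]
  have h1 := mul_le_mul_of_nonneg_left hstein (by positivity : 0 ≤ 2 * γ)
  have h2 := mul_pos (mul_pos hγ0 (sub_pos.2 hγ2)) hpos
  nlinarith

end Shrinkage

/-! ### Translation from matrices -/

section Matrices

variable {d m : ℕ}

open scoped MatrixOrder Matrix.Norms.L2Operator in
lemma exists_transpose_mul_self {S : Matrix (Fin d) (Fin d) ℝ} (hS : S.PosSemidef) :
    ∃ L : Matrix (Fin d) (Fin d) ℝ, S = Lᵀ * L := by
  obtain ⟨L, hL⟩ := CStarAlgebra.nonneg_iff_eq_star_mul_self.1 hS.nonneg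
  exact ⟨L, by simpa [star_eq_conjTranspose] using hL⟩

/-- An eigenvector `e` of the symmetric matrix `L M Lᵀ` either is killed by `Lᵀ` or gives the
eigenvector `Lᵀ e` of `Lᵀ L M` with the same eigenvalue, so all eigenvalues of `L M Lᵀ` are at
most the operator norm of the (possibly non-symmetric) matrix `Lᵀ L M`. -/
lemma quadForm_le_matOpNorm (L M : Matrix (Fin d) (Fin d) ℝ) (hM : M.IsHermitian)
    (v : Fin d → ℝ) :
    v ⬝ᵥ (L * M * Lᵀ) *ᵥ v ≤ matOpNorm (Lᵀ * L * M) * (v ⬝ᵥ v) := by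
  set w := matOpNorm (Lᵀ * L * M) with hw
  have hN : (L * M * Lᵀ).IsHermitian := by
    have := isHermitian_mul_mul_conjTranspose L hM
    simpa [conjTranspose_eq_transpose_of_trivial] using this
  have hH : (w • (1 : Matrix (Fin d) (Fin d) ℝ) - L * M * Lᵀ).IsHermitian := by
    refine IsHermitian.sub ?_ hN
    simp [IsHermitian]
  have hpsd : (w • (1 : Matrix (Fin d) (Fin d) ℝ) - L * M * Lᵀ).PosSemidef := by
    rw [hH.posSemidef_iff_eigenvalues_nonneg]
    intro i
    have he := hH.mulVec_eigenvectorBasis i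
    set lam := hH.eigenvalues i with hlam
    set e : Fin d → ℝ := (hH.eigenvectorBasis i).ofLp with he'
    have he0 : e ≠ 0 := by
      intro h
      have h1 := hH.eigenvectorBasis.orthonormal.ne_zero i
      exact h1 (by ext k; exact congrFun h k)
    have hNe : (L * M * Lᵀ) *ᵥ e = (w - lam) • e := by
      rw [sub_mulVec, smul_mulVec, one_mulVec] at he
      rw [sub_smul, ← he]; abel
    change 0 ≤ lam
    have hWe : (Lᵀ * L * M) *ᵥ (Lᵀ *ᵥ e) = (w - lam) • (Lᵀ *ᵥ e) := by
      rw [← mulVec_smul, ← hNe]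
      simp only [mulVec_mulVec, Matrix.mul_assoc]
    by_cases h0 : Lᵀ *ᵥ e = 0
    · have h1 : (L * M * Lᵀ) *ᵥ e = 0 := by
        rw [← mulVec_mulVec, h0, mulVec_zero]
      rw [hNe] at h1
      have h2 : w - lam = 0 := (smul_eq_zero.1 h1).resolve_right he0
      have h3 : 0 ≤ w := norm_nonneg _
      linarith
    · have h1 := (toEuclideanCLM (𝕜 := ℝ) (Lᵀ * L * M)).le_opNorm (WithLp.toLp 2 (Lᵀ *ᵥ e))
      rw [toEuclideanCLM_toLp, hWe, WithLp.toLp_smul, norm_smul] at h1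
      have h2 : 0 < ‖WithLp.toLp 2 (Lᵀ *ᵥ e)‖ := norm_pos_iff.2 (by simpa using h0)
      have h3 : ‖w - lam‖ ≤ w := le_of_mul_le_mul_right h1 h2
      linarith [le_abs_self (w - lam), Real.norm_eq_abs (w - lam)]
  have := hpsd.dotProduct_mulVec_nonneg v
  simp only [star_trivial, sub_mulVec, smul_mulVec, one_mulVec, dotProduct_sub,
    dotProduct_smul, smul_eq_mul] at this
  linarith

/-- The columns of a matrix, as Euclidean vectors. -/
def colE (B : Matrix (Fin d) (Fin m) ℝ) (i : Fin m) : EuclideanSpace ℝ (Fin d) :=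
  WithLp.toLp 2 fun k => B k i

lemma affineMap_colE (B : Matrix (Fin d) (Fin m) ℝ) (t : Fin d → ℝ) (x : Fin m → ℝ) :
    affineMap (colE B) (WithLp.toLp 2 t) x = WithLp.toLp 2 (B *ᵥ x + t) := by
  ext k
  simp [affineMap, colE, mulVec, dotProduct, mul_comm]

lemma inner_toLp (u v : Fin d → ℝ) : ⟪WithLp.toLp 2 u, WithLp.toLp 2 v⟫ = u ⬝ᵥ v := by
  simp [PiLp.inner_apply, dotProduct, mul_comm]

lemma sum_inner_colE (B C : Matrix (Fin d) (Fin m) ℝ) :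
    ∑ i, ⟪colE C i, colE B i⟫ = (B * Cᵀ).trace := by
  simp only [colE, inner_toLp, dotProduct, trace, diag, Matrix.mul_apply, transpose_apply]
  rw [Finset.sum_comm]
  simp [mul_comm]

lemma sum_inner_colE_mul (B C : Matrix (Fin d) (Fin m) ℝ) (v : Fin d → ℝ) :
    ∑ i, ⟪colE C i, WithLp.toLp 2 v⟫ * ⟪colE B i, WithLp.toLp 2 v⟫ = v ⬝ᵥ (C * Bᵀ) *ᵥ v := by
  rw [← mulVec_mulVec, dotProduct_mulVec, ← mulVec_transpose]
  simp only [colE, inner_toLp]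
  rfl

lemma norm_sq_toLp_mulVec (L : Matrix (Fin d) (Fin d) ℝ) (u : Fin d → ℝ) :
    ‖WithLp.toLp 2 (L *ᵥ u)‖ ^ 2 = u ⬝ᵥ (Lᵀ * L) *ᵥ u := by
  rw [← real_inner_self_eq_norm_sq, inner_toLp, ← mulVec_mulVec, dotProduct_mulVec u,
    vecMul_transpose]

end Matrices

/-- Second part of Corollary 1 of the paper in Gaussian-limit form: when
`τᵀPτ ≥ tr(W)`, the asymptotic risk of the semi-modular posterior mean is strictly
smaller than the asymptotic risk of the exact posterior mean. -/
theorem stmt_13 {m d₁ : ℕ} (hd₁ : 3 ≤ d₁)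
    (Ω : Matrix (Fin m) (Fin m) ℝ) (hΩ : Ω.PosSemidef)
    (μ : Measure (Fin m → ℝ)) (hμ : IsGaussianLaw μ 0 Ω)
    (τ : Fin m → ℝ)
    (Γ₁ Γ : Matrix (Fin d₁) (Fin m) ℝ) (hΓ₁τ : Γ₁.mulVec τ = 0)
    (Υ : Matrix (Fin d₁) (Fin d₁) ℝ) (hΥ : Υ.PosDef) (hΥsymm : Υ.IsSymm)
    (M : Matrix (Fin d₁) (Fin d₁) ℝ) (hMdef : M = (Γ₁ - Γ) * Ω * (Γ₁ - Γ)ᵀ)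
    (hMcross : Γ₁ * Ω * (Γ₁ - Γ)ᵀ = M)
    (P : Matrix (Fin m) (Fin m) ℝ) (hPdef : P = (Γ₁ - Γ)ᵀ * Υ * (Γ₁ - Γ))
    (hMpd : M.PosDef)
    (W : Matrix (Fin d₁) (Fin d₁) ℝ) (hWdef : W = Υ * M)
    (hW : 0 < W.trace - 2 * matOpNorm W)
    (γ : ℝ) (hγ0 : 0 < γ) (hγ2 : γ < 2 * (W.trace - 2 * matOpNorm W))
    (hτP : W.trace ≤ τ ⬝ᵥ P.mulVec τ) :
    ∀ Q : (Fin m → ℝ) → ℝ, Q = (fun x => (x + τ) ⬝ᵥ P.mulVec (x + τ)) →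
    ∀ Ψ : (Fin m → ℝ) → Fin d₁ → ℝ,
      Ψ = (fun x => Γ₁.mulVec (x + τ) - (γ / Q x) • (Γ₁ - Γ).mulVec (x + τ)) →
      ∫ x, Ψ x ⬝ᵥ Υ.mulVec (Ψ x) ∂μ
        < ∫ x, Γ.mulVec (x + τ) ⬝ᵥ Υ.mulVec (Γ.mulVec (x + τ)) ∂μ := by
  intro Q hQ Ψ hΨ
  subst hQ hΨ
  obtain ⟨A, hA, rfl⟩ := hμ
  obtain ⟨L, hL⟩ := exists_transpose_mul_self hΥ.posSemidef
  set D := Γ₁ - Γ with hD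
  set b := colE (L * D * A) with hb
  set c := colE (L * Γ₁ * A) with hc
  set θ : EuclideanSpace ℝ (Fin d₁) := WithLp.toLp 2 (L *ᵥ (D *ᵥ τ)) with hθ
  have hMsymm : Mᵀ = M := by simpa using hMpd.isHermitian.eq
  have hY : ∀ x, affineMap b θ x = WithLp.toLp 2 (L *ᵥ (D *ᵥ (A *ᵥ x + τ))) := fun x => by
    rw [hb, hθ, affineMap_colE]
    simp only [mulVec_add, mulVec_mulVec, Matrix.mul_assoc]
  have hZ : ∀ x, affineMap c 0 x = WithLp.toLp 2 (L *ᵥ (Γ₁ *ᵥ (A *ᵥ x + τ))) := fun x => by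
    rw [hc, ← WithLp.toLp_zero, affineMap_colE, mulVec_add, hΓ₁τ]
    simp only [add_zero, mulVec_mulVec, Matrix.mul_assoc]
  have hMcross' : D * Ω * Γ₁ᵀ = M := by
    have hΩ' : Ωᵀ = Ω := by simpa using hΩ.isHermitian.eq
    rw [← hMsymm, ← hMcross]
    simp [Matrix.mul_assoc, hΩ']
  have hcb : ∑ i, ⟪c i, b i⟫ = W.trace := by
    rw [hc, hb, sum_inner_colE, hWdef, hL, ← hMcross', ← hA, Matrix.mul_assoc Lᵀ L,
      trace_mul_comm Lᵀ]
    simp only [transpose_mul, Matrix.mul_assoc]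
  have hbb : ∑ i, ‖b i‖ ^ 2 = W.trace := by
    simp only [← real_inner_self_eq_norm_sq]
    rw [hb, sum_inner_colE, hWdef, hL, hMdef, ← hA, Matrix.mul_assoc Lᵀ L, trace_mul_comm Lᵀ]
    simp only [transpose_mul, Matrix.mul_assoc]
  have hP : ∀ y, y ⬝ᵥ P *ᵥ y = ‖WithLp.toLp 2 (L *ᵥ (D *ᵥ y))‖ ^ 2 := fun y => by
    rw [norm_sq_toLp_mulVec, ← hL, hPdef, ← mulVec_mulVec, ← mulVec_mulVec, dotProduct_mulVec y,
      vecMul_transpose]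
  have hquad : ∀ x, ∑ i, ⟪c i, affineMap b θ x⟫ * ⟪b i, affineMap b θ x⟫
      ≤ matOpNorm W * ‖affineMap b θ x‖ ^ 2 := fun x => by
    rw [hY, hb, hc, sum_inner_colE_mul, ← real_inner_self_eq_norm_sq, inner_toLp, hWdef, hL]
    have h : L * Γ₁ * A * (L * D * A)ᵀ = L * M * Lᵀ := by
      rw [← hMcross, ← hA]
      simp only [transpose_mul, Matrix.mul_assoc]
    rw [h]
    exact quadForm_le_matOpNorm L M hMpd.isHermitian _
  have key := shrinkage_risk b c θ (norm_nonneg _ : 0 ≤ matOpNorm W) hquad (by rwa [hcb])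
    (by rw [hcb, hbb]) (by rw [hcb, hθ, ← hP]; exact hτP) hγ0 (by rwa [hcb])
  have hmap : ∀ f : (Fin m → ℝ) → ℝ, Measurable f →
      ∫ x, f x ∂(Measure.map (fun x => 0 + A *ᵥ x) (_root_.stdGaussian m))
        = ∫ x, f (A *ᵥ x) ∂(_root_.stdGaussian m) := fun f hf => by
    simp only [zero_add]
    exact integral_map (by fun_prop) hf.aestronglyMeasurable
  rw [hmap, hmap]
  · convert key using 3 with x x
    · beta_reduce
      rw [hP, hY, hZ, ← WithLp.toLp_smul, ← WithLp.toLp_sub, ← mulVec_smul L,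
        ← mulVec_sub, norm_sq_toLp_mulVec, ← hL, norm_sq_toLp_mulVec, ← hL]
    · rw [hY, hZ, ← WithLp.toLp_sub, ← mulVec_sub, norm_sq_toLp_mulVec, ← hL, hD, ← sub_mulVec,
        sub_sub_cancel]
  · fun_prop
  · fun_prop
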